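/- Let n and d be positive integers and μ, σ, γ, ε > 0. Let (Z_{ij})_{i ∈ {1,…,n+1}, j ∈ {1,…,d}} be i.i.d. random variables each distributed as the Gaussian N(μ, σ²), i.e. the underlying measure is the product over (i,j) of the Gaussian measure N(μ, σ²) on ℝ. Define S_j = Σ_{i=1}^n Z_{ij} for j = 1,…,d, let θ ∈ ℝ^d have coordinates θ_j = γ·sign(S_j/n − ε·sign(S_j/n)), and let Z* = (Z_{(n+1)1}, …, Z_{(n+1)d}) be the test point. Then E[⟨θ, S/n⟩ − ⟨θ, Z*⟩] = d·γ·σ·√(2/(nπ))·(exp(−n(ε+μ)²/(2σ²)) + exp(−n(ε−μ)²/(2σ²)) − exp(−nμ²/(2σ²))). -/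

import Mathlib

open MeasureTheory ProbabilityTheory
open Filter Set Topology
open scoped NNReal

/-!
Each coordinate of the minimizer is `γ * shrunkSign ε m`, where `m` is the sample mean of that
coordinate, and `m` is independent of the test point. The test point may therefore be replaced by
its mean `μ`, and the gap is a sum of copies of `γ * E[shrunkSign ε m * (m - μ)]` with
`m ∼ N(μ, σ² / n)`. For `0 ≤ ε` the shrunk sign of `m` is `sign (m - ε) + sign (m + ε) - sign m`,
which reduces the expectation to `E[sign (m - a) * (m - μ)] = 2 v p(a)`, where `v` and `p` are the
variance and density of `m`; this holds because `-v p` is an antiderivative of `(x - μ) p(x)`.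
-/

section ShrunkSign

lemma measurable_real_sign : Measurable Real.sign :=
  Measurable.ite measurableSet_Iio measurable_const
    (Measurable.ite measurableSet_Ioi measurable_const measurable_const)

lemma norm_real_sign_le_one (x : ℝ) : ‖Real.sign x‖ ≤ 1 := by
  rcases Real.sign_apply_eq x with h | h | h <;> simp [h]

/-- The sign of `x` shrunk towards zero by `ε`: up to the factor `γ`, the coordinate of the
`ℓ∞`-robust empirical risk minimizer at a sample mean `x`. For `ε < |x|` it is the sign of `x`, but
for `0 < |x| < ε` the shrinkage overshoots zero and flips the sign. -/
noncomputable def shrunkSign (ε x : ℝ) : ℝ := Real.sign (x - ε * Real.sign x)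

lemma measurable_shrunkSign (ε : ℝ) : Measurable (shrunkSign ε) :=
  measurable_real_sign.comp (measurable_id.sub (measurable_real_sign.const_mul ε))

lemma norm_shrunkSign_le_one (ε x : ℝ) : ‖shrunkSign ε x‖ ≤ 1 :=
  norm_real_sign_le_one _

lemma shrunkSign_eq_sign_sub_add_sign_add_sub_sign {ε : ℝ} (hε : 0 ≤ ε) (x : ℝ) :
    shrunkSign ε x = Real.sign (x - ε) + Real.sign (x + ε) - Real.sign x := by
  rcases lt_trichotomy x 0 with hx | rfl | hx
  · rw [shrunkSign, Real.sign_of_neg hx, Real.sign_of_neg (by linarith : x - ε < 0)]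
    ring_nf
  · simp [shrunkSign, Real.sign_neg]
  · rw [shrunkSign, Real.sign_of_pos hx, Real.sign_of_pos (by linarith : 0 < x + ε)]
    ring_nf

end ShrunkSign

section Gaussian

variable {μ : ℝ} {v : ℝ≥0}

lemma integrable_id_gaussianReal : Integrable (fun x : ℝ ↦ x) (gaussianReal μ v) :=
  (memLp_id_gaussianReal 1).integrable le_rfl

lemma integrable_of_hasLaw_gaussianReal {Ω : Type*} [MeasurableSpace Ω] {P : Measure Ω}
    {X : Ω → ℝ} (hX : HasLaw X (gaussianReal μ v) P) : Integrable X P :=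
  (hX.map_eq ▸ integrable_id_gaussianReal).comp_aemeasurable hX.aemeasurable

lemma integrable_sub_gaussianReal (c : ℝ) : Integrable (fun x ↦ x - c) (gaussianReal μ v) :=
  integrable_id_gaussianReal.sub (integrable_const c)

lemma hasDerivAt_gaussianPDFReal (μ : ℝ) (v : ℝ≥0) (x : ℝ) :
    HasDerivAt (gaussianPDFReal μ v) (-(x - μ) / v * gaussianPDFReal μ v x) x := by
  have hexponent : HasDerivAt (fun x ↦ -(x - μ) ^ 2 / (2 * v)) (-(x - μ) / v) x := by
    refine ((((hasDerivAt_id x).sub_const μ).pow 2).neg.div_const (2 * (v : ℝ))).congr_deriv ?_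
    simp only [id, Nat.cast_ofNat, mul_one]
    ring
  refine (hexponent.exp.const_mul (√(2 * Real.pi * v))⁻¹).congr_deriv ?_
  rw [gaussianPDFReal]
  ring

lemma tendsto_gaussianPDFReal_atTop (μ : ℝ) (v : ℝ≥0) :
    Tendsto (gaussianPDFReal μ v) atTop (𝓝 0) := by
  rcases eq_or_ne v 0 with rfl | hv
  · simpa using! tendsto_const_nhds
  have hexponent : Tendsto (fun x : ℝ ↦ -(x - μ) ^ 2 / (2 * v)) atTop atBot :=
    (tendsto_neg_atTop_atBot.comp ((tendsto_pow_atTop two_ne_zero).comp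
      (tendsto_atTop_add_const_right _ (-μ) tendsto_id))).atBot_div_const (by positivity)
  simpa only [mul_zero] using!
    (Real.tendsto_exp_atBot.comp hexponent).const_mul (√(2 * Real.pi * v))⁻¹

lemma setIntegral_Ioi_sub_mean_gaussianReal (hv : v ≠ 0) (a : ℝ) :
    ∫ x in Ioi a, (x - μ) ∂gaussianReal μ v = v * gaussianPDFReal μ v a := by
  have hint : Integrable fun x ↦ gaussianPDFReal μ v x * (x - μ) := by
    have h := integrable_sub_gaussianReal (μ := μ) (v := v) μ
    rw [gaussianReal_of_var_ne_zero _ hv, integrable_withDensity_iff_integrable_smul'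
      (measurable_gaussianPDF _ _) (ae_of_all _ fun _ ↦ gaussianPDF_lt_top)] at h
    simpa using h
  have hderiv (x : ℝ) : HasDerivAt (fun x ↦ -v * gaussianPDFReal μ v x)
      (gaussianPDFReal μ v x * (x - μ)) x := by
    refine ((hasDerivAt_gaussianPDFReal μ v x).const_mul (-v : ℝ)).congr_deriv ?_
    field_simp
  have hlim : Tendsto (fun x ↦ -v * gaussianPDFReal μ v x) atTop (𝓝 0) := by
    simpa using (tendsto_gaussianPDFReal_atTop μ v).const_mul (-v : ℝ)
  calc ∫ x in Ioi a, (x - μ) ∂gaussianReal μ v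
      = ∫ x in Ioi a, gaussianPDFReal μ v x * (x - μ) := by
        rw [gaussianReal_of_var_ne_zero _ hv, setIntegral_withDensity_eq_setIntegral_toReal_smul
          (measurable_gaussianPDF _ _) (ae_of_all _ fun _ ↦ gaussianPDF_lt_top) _
          measurableSet_Ioi]
        simp only [toReal_gaussianPDF, smul_eq_mul]
    _ = v * gaussianPDFReal μ v a := by
        rw [integral_Ioi_of_hasDerivAt_of_tendsto' (fun x _ ↦ hderiv x) hint.integrableOn hlim]
        ring

lemma integrable_sign_sub_mul_sub_gaussianReal (a c : ℝ) :
    Integrable (fun x ↦ Real.sign (x - a) * (x - c)) (gaussianReal μ v) :=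
  (integrable_sub_gaussianReal c).bdd_mul
    (measurable_real_sign.comp (measurable_sub_const a)).aestronglyMeasurable
    (ae_of_all _ fun _ ↦ norm_real_sign_le_one _)

lemma integral_sign_sub_mul_sub_mean_gaussianReal (hv : v ≠ 0) (a : ℝ) :
    ∫ x, Real.sign (x - a) * (x - μ) ∂gaussianReal μ v = 2 * v * gaussianPDFReal μ v a := by
  have := nullSingletonClass_gaussianReal (μ := μ) hv
  have hcentered : ∫ x, (x - μ) ∂gaussianReal μ v = 0 := by
    simp [integral_sub integrable_id_gaussianReal (integrable_const μ)]
  have hsign : (fun x ↦ Real.sign (x - a) * (x - μ)) =ᵐ[gaussianReal μ v]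
      fun x ↦ 2 * (Ioi a).indicator (fun x ↦ x - μ) x - (x - μ) := by
    filter_upwards [Measure.ae_ne (gaussianReal μ v) a] with x hx
    rcases hx.lt_or_gt with hlt | hgt
    · simp [Real.sign_of_neg (sub_neg.2 hlt), hlt.le]
    · simp only [Real.sign_of_pos (sub_pos.2 hgt), indicator_of_mem (mem_Ioi.2 hgt)]
      ring
  have hint := integrable_sub_gaussianReal (μ := μ) (v := v) μ
  rw [integral_congr_ae hsign, integral_sub ((hint.indicator measurableSet_Ioi).const_mul 2) hint,
    integral_const_mul, integral_indicator measurableSet_Ioi,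
    setIntegral_Ioi_sub_mean_gaussianReal hv, hcentered]
  ring

lemma integral_shrunkSign_mul_sub_mean_gaussianReal (hv : v ≠ 0) {ε : ℝ} (hε : 0 ≤ ε) :
    ∫ x, shrunkSign ε x * (x - μ) ∂gaussianReal μ v =
      2 * v * (gaussianPDFReal μ v (-ε) + gaussianPDFReal μ v ε - gaussianPDFReal μ v 0) := by
  have hint := integrable_sign_sub_mul_sub_gaussianReal (μ := μ) (v := v) (c := μ)
  have hsplit (x : ℝ) : shrunkSign ε x * (x - μ) =
      Real.sign (x - -ε) * (x - μ) + Real.sign (x - ε) * (x - μ) - Real.sign (x - 0) * (x - μ) := by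
    rw [shrunkSign_eq_sign_sub_add_sign_add_sub_sign hε, sub_neg_eq_add, sub_zero]
    ring
  simp_rw [hsplit]
  rw [integral_sub ((hint _).fun_add (hint _)) (hint _), integral_add (hint _) (hint _)]
  simp_rw [integral_sign_sub_mul_sub_mean_gaussianReal hv]
  ring

lemma two_mul_variance_mul_gaussianPDFReal (μ : ℝ) (v : ℝ≥0) (x : ℝ) :
    2 * v * gaussianPDFReal μ v x = √(2 * v / Real.pi) * Real.exp (-(x - μ) ^ 2 / (2 * v)) := by
  have hscale : 2 * v * (√(2 * Real.pi * v))⁻¹ = √(2 * v / Real.pi) := by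
    rcases eq_or_ne v 0 with rfl | hv
    · simp
    have hprod : 2 * v / Real.pi * (2 * Real.pi * v) = (2 * v : ℝ) ^ 2 := by field_simp
    rw [mul_inv_eq_iff_eq_mul₀ (by positivity), ← Real.sqrt_mul (by positivity), hprod,
      Real.sqrt_sq (by positivity)]
  rw [gaussianPDFReal, ← mul_assoc, hscale]

end Gaussian

section SampleMean

variable {Ω κ : Type*} [MeasurableSpace Ω] {P : Measure Ω} {X : κ → Ω → ℝ}

lemma hasLaw_sum_gaussianReal {m : κ → ℝ} {v : κ → ℝ≥0} (hindep : iIndepFun X P)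
    (hlaw : ∀ k, HasLaw (X k) (gaussianReal (m k) (v k)) P) (s : Finset κ) :
    HasLaw (fun ω ↦ ∑ k ∈ s, X k ω) (gaussianReal (∑ k ∈ s, m k) (∑ k ∈ s, v k)) P where
  aemeasurable := s.aemeasurable_fun_sum fun k _ ↦ (hlaw k).aemeasurable
  map_eq := by
    have := hindep.isProbabilityMeasure
    refine Measure.ext_of_charFun ?_
    ext t
    rw [(hindep.restrict s).charFun_map_fun_finsetSum_eq_prod fun k _ ↦ (hlaw k).aemeasurable,
      Finset.prod_apply]
    simp only [(hlaw _).map_eq, charFun_gaussianReal, ← Complex.exp_sum]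
    push_cast
    simp only [Finset.sum_sub_distrib, Finset.mul_sum, Finset.sum_mul, Finset.sum_div]

lemma hasLaw_mean_gaussianReal {μ : ℝ} {v : ℝ≥0} (hindep : iIndepFun X P)
    (hlaw : ∀ k, HasLaw (X k) (gaussianReal μ v) P) {s : Finset κ} (hs : s.Nonempty) :
    HasLaw (fun ω ↦ (∑ k ∈ s, X k ω) / s.card) (gaussianReal μ (v / s.card)) P := by
  have hcard : (s.card : ℝ) ≠ 0 := by exact_mod_cast hs.card_ne_zero
  convert! gaussianReal_div_const (hasLaw_sum_gaussianReal hindep hlaw s) s.card using 2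
  · simp only [Finset.sum_const, nsmul_eq_mul]
    field_simp
  · ext
    simp only [Finset.sum_const, nsmul_eq_mul, NNReal.coe_div, NNReal.coe_mul,
      NNReal.coe_natCast, NNReal.coe_mk]
    field_simp

lemma indepFun_mean_of_notMem (hindep : iIndepFun X P) (hmeas : ∀ k, AEMeasurable (X k) P)
    {s : Finset κ} {i : κ} (hi : i ∉ s) :
    IndepFun (fun ω ↦ (∑ k ∈ s, X k ω) / s.card) (X i) P := by
  convert! (hindep.indepFun_finsetSum_of_notMem₀ hmeas hi).comp
    (measurable_id.div_const (s.card : ℝ)) measurable_id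
  simp

end SampleMean

section LossGap

variable {Ω : Type*} [MeasurableSpace Ω] {P : Measure Ω} {X Y : Ω → ℝ} {f : ℝ → ℝ}

lemma integrable_comp_mul_of_bound {C : ℝ} (hf : Measurable f) (hfC : ∀ x, ‖f x‖ ≤ C)
    (hX : AEMeasurable X P) (hY : Integrable Y P) : Integrable (fun ω ↦ f (X ω) * Y ω) P :=
  hY.bdd_mul (hf.comp_aemeasurable hX).aestronglyMeasurable (ae_of_all _ fun _ ↦ hfC _)

lemma integral_comp_mul_sub_eq_of_indepFun [IsFiniteMeasure P] {C : ℝ} (hf : Measurable f)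
    (hfC : ∀ x, ‖f x‖ ≤ C) (hX : Integrable X P) (hY : Integrable Y P) (hXY : IndepFun X Y P) :
    ∫ ω, f (X ω) * (X ω - Y ω) ∂P = ∫ ω, f (X ω) * (X ω - P[Y]) ∂P := by
  have hint {Z : Ω → ℝ} (hZ : Integrable Z P) : Integrable (fun ω ↦ f (X ω) * Z ω) P :=
    integrable_comp_mul_of_bound hf hfC hX.aemeasurable hZ
  have hfactor : ∫ ω, f (X ω) * Y ω ∂P = ∫ ω, f (X ω) * P[Y] ∂P := by
    rw [integral_mul_const]
    exact hXY.integral_fun_comp_mul_comp (g := id) hX.aemeasurable hY.aemeasurable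
      hf.aestronglyMeasurable aestronglyMeasurable_id
  simp_rw [mul_sub]
  rw [integral_sub (hint hX) (hint hY), integral_sub (hint hX) (hint (integrable_const _)), hfactor]

lemma integral_shrunkSign_mul_sub_of_indepFun {μ : ℝ} {v : ℝ≥0} (hv : v ≠ 0) {ε : ℝ}
    (hε : 0 ≤ ε) (hX : HasLaw X (gaussianReal μ v) P) (hY : Integrable Y P) (hYμ : P[Y] = μ)
    (hXY : IndepFun X Y P) :
    ∫ ω, shrunkSign ε (X ω) * (X ω - Y ω) ∂P =
      √(2 * v / Real.pi) * (Real.exp (-(ε + μ) ^ 2 / (2 * v)) +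
        Real.exp (-(ε - μ) ^ 2 / (2 * v)) - Real.exp (-μ ^ 2 / (2 * v))) := by
  have := hX.isProbabilityMeasure
  have hmeas : Measurable fun x ↦ shrunkSign ε x * (x - μ) :=
    (measurable_shrunkSign ε).mul (measurable_sub_const μ)
  calc ∫ ω, shrunkSign ε (X ω) * (X ω - Y ω) ∂P
      = ∫ ω, shrunkSign ε (X ω) * (X ω - μ) ∂P := by
        rw [integral_comp_mul_sub_eq_of_indepFun (measurable_shrunkSign ε)
          (norm_shrunkSign_le_one ε) (integrable_of_hasLaw_gaussianReal hX) hY hXY, hYμ]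
    _ = ∫ x, shrunkSign ε x * (x - μ) ∂gaussianReal μ v :=
        hX.integral_comp hmeas.aestronglyMeasurable
    _ = _ := by
        rw [integral_shrunkSign_mul_sub_mean_gaussianReal hv hε, mul_sub, mul_add]
        simp_rw [two_mul_variance_mul_gaussianPDFReal]
        ring_nf

lemma integral_shrunkSign_mean_mul_sub {κ : Type*} {Z : κ → Ω → ℝ} {μ ε : ℝ} {σ : ℝ≥0}
    (hσ : σ ≠ 0) (hε : 0 ≤ ε) (hindep : iIndepFun Z P)
    (hlaw : ∀ i, HasLaw (Z i) (gaussianReal μ (σ ^ 2)) P)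
    {s : Finset κ} (hs : s.Nonempty) {t : κ} (ht : t ∉ s) :
    ∫ ω, shrunkSign ε ((∑ i ∈ s, Z i ω) / s.card) * ((∑ i ∈ s, Z i ω) / s.card - Z t ω) ∂P =
      σ * √(2 / (s.card * Real.pi)) *
        (Real.exp (-(s.card * (ε + μ) ^ 2) / (2 * σ ^ 2)) +
          Real.exp (-(s.card * (ε - μ) ^ 2) / (2 * σ ^ 2)) -
          Real.exp (-(s.card * μ ^ 2) / (2 * σ ^ 2))) := by
  have hscale : √(2 * ↑(σ ^ 2 / s.card : ℝ≥0) / Real.pi) = σ * √(2 / (s.card * Real.pi)) := by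
    rw [← Real.sqrt_sq σ.coe_nonneg, ← Real.sqrt_mul (by positivity)]
    congr 1
    push_cast
    field_simp
  have hexponent (x : ℝ) :
      -x ^ 2 / (2 * ↑(σ ^ 2 / s.card : ℝ≥0)) = -(s.card * x ^ 2) / (2 * σ ^ 2) := by
    push_cast
    field_simp
  rw [integral_shrunkSign_mul_sub_of_indepFun
    (div_ne_zero (pow_ne_zero 2 hσ) (Nat.cast_ne_zero.2 hs.card_ne_zero)) hε
    (hasLaw_mean_gaussianReal hindep hlaw hs) (integrable_of_hasLaw_gaussianReal (hlaw t))
    ((hlaw t).integral_eq.trans integral_id_gaussianReal)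
    (indepFun_mean_of_notMem hindep (fun i ↦ (hlaw i).aemeasurable) ht)]
  simp only [hscale, hexponent]

theorem robust_loss_gap_general {κ ι : Type*} [Fintype ι] {μ ε : ℝ} {σ : ℝ≥0} (γ : ℝ)
    (hσ : σ ≠ 0) (hε : 0 ≤ ε) {Z : κ → ι → Ω → ℝ} (hindep : ∀ j, iIndepFun (fun i ↦ Z i j) P)
    (hlaw : ∀ i j, HasLaw (Z i j) (gaussianReal μ (σ ^ 2)) P)
    {s : Finset κ} (hs : s.Nonempty) {t : κ} (ht : t ∉ s) :
    ∫ ω, ((∑ j, γ * shrunkSign ε ((∑ i ∈ s, Z i j ω) / s.card) * ((∑ i ∈ s, Z i j ω) / s.card)) -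
        ∑ j, γ * shrunkSign ε ((∑ i ∈ s, Z i j ω) / s.card) * Z t j ω) ∂P =
      Fintype.card ι * γ * σ * √(2 / (s.card * Real.pi)) *
        (Real.exp (-(s.card * (ε + μ) ^ 2) / (2 * σ ^ 2)) +
          Real.exp (-(s.card * (ε - μ) ^ 2) / (2 * σ ^ 2)) -
          Real.exp (-(s.card * μ ^ 2) / (2 * σ ^ 2))) := by
  let mean (j : ι) (ω : Ω) : ℝ := (∑ i ∈ s, Z i j ω) / s.card
  have hmean (j : ι) : HasLaw (mean j) (gaussianReal μ (σ ^ 2 / s.card)) P :=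
    hasLaw_mean_gaussianReal (hindep j) (hlaw · j) hs
  have hint (j : ι) : Integrable (fun ω ↦ shrunkSign ε (mean j ω) * (mean j ω - Z t j ω)) P :=
    integrable_comp_mul_of_bound (measurable_shrunkSign ε) (norm_shrunkSign_le_one ε)
      (hmean j).aemeasurable ((integrable_of_hasLaw_gaussianReal (hmean j)).sub
        (integrable_of_hasLaw_gaussianReal (hlaw t j)))
  calc _ = ∫ ω, γ * ∑ j, shrunkSign ε (mean j ω) * (mean j ω - Z t j ω) ∂P := by
        simp only [← Finset.sum_sub_distrib, ← mul_sub, mul_assoc, Finset.mul_sum, mean]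
    _ = γ * ∑ j, ∫ ω, shrunkSign ε (mean j ω) * (mean j ω - Z t j ω) ∂P := by
        rw [integral_const_mul, integral_finsetSum _ fun j _ ↦ hint j]
    _ = _ := by
        simp only [mean, integral_shrunkSign_mean_mul_sub hσ hε (hindep _) (hlaw · _) hs ht,
          Finset.sum_const, Finset.card_univ, nsmul_eq_mul]
        ring

end LossGap

/-- Loss gap of the robust model: with `(Z_{ij})` i.i.d. `N(μ, σ²)` for
`i ∈ {1,…,n+1}`, `j ∈ {1,…,d}`, `S_j = ∑_{i=1}^n Z_{ij}`,
`θ_j = γ·sign(S_j/n − ε·sign(S_j/n))` and test point `Z*_j = Z_{(n+1)j}`,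
`E[⟨θ, S/n⟩ − ⟨θ, Z*⟩]
  = d·γ·σ·√(2/(nπ))·(exp(−n(ε+μ)²/(2σ²)) + exp(−n(ε−μ)²/(2σ²)) − exp(−nμ²/(2σ²)))`. -/
theorem robust_loss_gap (n d : ℕ) (hn : 0 < n) (hd : 0 < d)
    (μ σ γ ε : ℝ) (hμ : 0 < μ) (hσ : 0 < σ) (hγ : 0 < γ) (hε : 0 < ε) :
    (∫ ω : Fin (n + 1) × Fin d → ℝ,
        ((∑ j : Fin d,
            (γ * Real.sign ((∑ i : Fin n, ω (i.castSucc, j)) / n -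
                ε * Real.sign ((∑ i : Fin n, ω (i.castSucc, j)) / n))) *
              ((∑ i : Fin n, ω (i.castSucc, j)) / n)) -
          ∑ j : Fin d,
            (γ * Real.sign ((∑ i : Fin n, ω (i.castSucc, j)) / n -
                ε * Real.sign ((∑ i : Fin n, ω (i.castSucc, j)) / n))) * ω (Fin.last n, j))
        ∂(Measure.pi fun _ : Fin (n + 1) × Fin d => gaussianReal μ ⟨σ ^ 2, sq_nonneg σ⟩))
      = d * γ * σ * Real.sqrt (2 / (n * Real.pi)) *
        (Real.exp (-(n * (ε + μ) ^ 2) / (2 * σ ^ 2)) +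
          Real.exp (-(n * (ε - μ) ^ 2) / (2 * σ ^ 2)) -
          Real.exp (-(n * μ ^ 2) / (2 * σ ^ 2))) := by
  lift σ to ℝ≥0 using hσ.le
  have : NeZero n := ⟨hn.ne'⟩
  simpa only [Finset.sum_map, Finset.card_map, Finset.card_univ, Fintype.card_fin] using!
    robust_loss_gap_general γ (by exact_mod_cast hσ.ne') hε.le
      (Z := fun i j (ω : Fin (n + 1) × Fin d → ℝ) ↦ ω (i, j))
      (fun j ↦ (iIndepFun_pi (X := fun _ ↦ id) fun _ ↦ aemeasurable_id).precomp
        (Prod.mk_left_injective j))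
      (fun i j ↦ (measurePreserving_eval (fun _ ↦ gaussianReal μ (σ ^ 2)) (i, j)).hasLaw)
      (s := Finset.univ.map Fin.castSuccEmb) (by simp) (t := Fin.last n) (by simp)
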